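/- arXiv:math/0209068 — 2 statements merged into one kernel-verified Lean document; each statement's English description precedes it below -/
import Mathlib

section
/- Let P be a normal subgroup of a group Q of finite index n = [Q : P], let (id_P : P → P) be the identity crossed module on P, and let ι : P → Q be the inclusion. Then for any induced crossed module (∂ : I → Q, j) of (id_P : P → P) along ι, there is an isomorphism of groups I ≅ P × (P^{ab})^{n−1}, where P^{ab} is the abelianization of P and (P^{ab})^{n−1} denotes the direct product of n−1 copies of P^{ab}. -/
/-!
Write `T = Q ⧸ P`.  The group `P × (T → P^{ab})`, with `Q` acting by conjugation on `P` and
on `P^{ab}` and by translation on `T`, is a crossed module over `Q` under the first projection: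
an element of `P` translates `T` trivially and conjugates `P^{ab}` trivially, which gives CM2.
The map `p ↦ (p, [p] at the coset 1)` is a morphism from the identity crossed module, so the
universal property gives `Φ : I → P × (T → P^{ab})`.  It sends the element
`J q r = j (q r q⁻¹) ^ q`, for `r ∈ P`, to `(r, [r] at the coset of q)`.  Forgetting the coordinate
at `1` gives `forth : I → P × (T ∖ {1} → P^{ab})`, which is shown to be an isomorphism.

For the inverse, note that `∂ (J q r) = r` for every `q`.  Hence `r ↦ (j r)⁻¹ * J q r` takes values
in `ker ∂`, which is central by CM2, so this is a homomorphism `θ q` from `P` to the centre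
of `I`; it factors through `P^{ab}` and only depends on the coset of `q`.  The inverse is
`(p, a) ↦ j p * ∏ t ≠ 1, θ t (a t)`.  That it is a left inverse is checked on the elements `J q r`,
which generate `I` by the uniqueness part of the universal property.
-/

/-- A crossed module `(μ : M → P)`: groups `M`, `P`, a (right) action of `P` on `M` by
group automorphisms, written `act m p` for `m ^ p`, and a homomorphism `μ : M →* P`
satisfying CM1: `μ (m ^ p) = p⁻¹ * μ m * p` and CM2: `n ^ (μ m) = m⁻¹ * n * m`. -/
structure CrossedModule (M P : Type u) [Group M] [Group P] where
  μ : M →* P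
  act : M → P → M
  act_mul : ∀ m n p, act (m * n) p = act m p * act n p
  act_one : ∀ m, act m 1 = m
  act_act : ∀ m p q, act (act m p) q = act m (p * q)
  cm1 : ∀ m p, μ (act m p) = p⁻¹ * μ m * p
  cm2 : ∀ m n, act n (μ m) = m⁻¹ * n * m

/-- A morphism of crossed modules `(f, g) : (μ : M → P) → (ν : N → Q)`:
group homomorphisms `f : M → N`, `g : P → Q` with `ν ∘ f = g ∘ μ` and
`f (m ^ p) = (f m) ^ (g p)`. -/
def CrossedModule.IsMorphism {M P N Q : Type u} [Group M] [Group P] [Group N] [Group Q]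
    (X : CrossedModule M P) (Y : CrossedModule N Q) (f : M →* N) (g : P →* Q) : Prop :=
  (∀ m, Y.μ (f m) = g (X.μ m)) ∧ ∀ m p, f (X.act m p) = Y.act (f m) (g p)

/-- `(∂ : I → Q)` together with `j : M → I` is an induced crossed module of `(μ : M → P)`
along `ι : P → Q`: `(j, ι)` is a morphism of crossed modules, and for every crossed module
`(ν : N → Q)` and morphism `(f, ι) : (μ : M → P) → (ν : N → Q)` there is a unique group
homomorphism `φ : I → N` with `ν ∘ φ = ∂`, `φ (x ^ q) = (φ x) ^ q`, and `φ ∘ j = f`. -/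
def IsInducedCrossedModule {M P Q I : Type u} [Group M] [Group P] [Group Q] [Group I]
    (X : CrossedModule M P) (ι : P →* Q) (Y : CrossedModule I Q) (j : M →* I) : Prop :=
  CrossedModule.IsMorphism X Y j ι ∧
  ∀ (N : Type u) [Group N] (Z : CrossedModule N Q) (f : M →* N),
    CrossedModule.IsMorphism X Z f ι →
    ∃! φ : I →* N, (∀ x, Z.μ (φ x) = Y.μ x) ∧
      (∀ x q, φ (Y.act x q) = Z.act (φ x) q) ∧ ∀ m, φ (j m) = f m

/-- The identity crossed module `(id_P : P → P)` with `P` acting on itself by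
conjugation, `m ^ p = p⁻¹ * m * p`. -/
def conjCM (P : Type u) [Group P] : CrossedModule P P where
  μ := MonoidHom.id P
  act m p := p⁻¹ * m * p
  act_mul m n p := by group
  act_one m := by group
  act_act m p q := by group
  cm1 m p := rfl
  cm2 m n := rfl

namespace InducedNormal

/-! ### Generators of an induced crossed module -/

/-- The action of a fixed element of `Q` as an endomorphism of `I`. -/
def actHom {Q I : Type u} [Group Q] [Group I] (Y : CrossedModule I Q) (q : Q) : I →* I :=
  MonoidHom.mk' (fun x => Y.act x q) (fun x y => Y.act_mul x y q)

/-- The closure of the elements `j p ^ q` carries a crossed module structure through which `j`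
factors; the composite of the induced map `I → closure` with the inclusion is the identity by
uniqueness. -/
lemma closure_eq_top {Q I : Type u} [Group Q] {P : Subgroup Q} [Group I]
    {Y : CrossedModule I Q} {j : P →* I}
    (hInd : IsInducedCrossedModule (conjCM P) P.subtype Y j) :
    Subgroup.closure (Set.range fun x : P × Q => Y.act (j x.1) x.2) = ⊤ := by
  set S := Subgroup.closure (Set.range fun x : P × Q => Y.act (j x.1) x.2) with hS
  have hact : ∀ x ∈ S, ∀ q, Y.act x q ∈ S := by
    intro x hx q
    have : S ≤ S.comap (actHom Y q) := by
      rw [hS, Subgroup.closure_le]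
      rintro _ ⟨⟨p, s⟩, rfl⟩
      refine Subgroup.subset_closure ⟨(p, s * q), ?_⟩
      exact (Y.act_act _ _ _).symm
    exact this hx
  have hjS : ∀ p, j p ∈ S := fun p => Subgroup.subset_closure ⟨(p, 1), Y.act_one _⟩
  let Z : CrossedModule S Q :=
    { μ := Y.μ.comp S.subtype
      act := fun x q => ⟨Y.act x q, hact x x.2 q⟩
      act_mul := fun m n p => Subtype.ext (Y.act_mul _ _ _)
      act_one := fun m => Subtype.ext (Y.act_one _)
      act_act := fun m p q => Subtype.ext (Y.act_act _ _ _)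
      cm1 := fun m p => Y.cm1 _ _
      cm2 := fun m n => Subtype.ext (Y.cm2 _ _) }
  obtain ⟨φ, ⟨h1, h2, h3⟩, -⟩ := hInd.2 S Z (j.codRestrict S hjS)
    ⟨fun m => hInd.1.1 m, fun m p => Subtype.ext (hInd.1.2 m p)⟩
  have hid : S.subtype.comp φ = MonoidHom.id I :=
    (hInd.2 I Y j hInd.1).unique
      ⟨h1, fun x q => congrArg Subtype.val (h2 x q), fun m => congrArg Subtype.val (h3 m)⟩
      ⟨fun _ => rfl, fun _ _ => rfl, fun _ => rfl⟩
  rw [eq_top_iff]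
  intro x _
  have := DFunLike.congr_fun hid x
  rw [← show (φ x : I) = x from this]
  exact (φ x).2

/-! ### The model crossed module on `P × (Q ⧸ P → P^{ab})` -/

variable {Q : Type u} [Group Q] (P : Subgroup Q) [hPQ : P.Normal]

/-- Conjugation `r ↦ q⁻¹ * r * q` on the normal subgroup `P`. -/
def cj (q : Q) : P →* P := (MulAut.conjNormal q⁻¹ : MulAut P).toMonoidHom

@[simp] lemma coe_cj (q : Q) (r : P) : (cj P q r : Q) = q⁻¹ * r * q := by
  simp [cj]

lemma cj_one (r : P) : cj P 1 r = r := by ext; simp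

lemma cj_cj (q s : Q) (r : P) : cj P s (cj P q r) = cj P (q * s) r := by
  ext; simp [mul_assoc]

lemma cj_mem (p r : P) : cj P (p : Q) r = p⁻¹ * r * p := by ext; simp

/-- The right action of `Q` on `P^{ab}` induced by conjugation. -/
def cjAb (q : Q) : Abelianization P →* Abelianization P := Abelianization.map (cj P q)

@[simp] lemma cjAb_of (q : Q) (r : P) :
    cjAb P q (Abelianization.of r) = Abelianization.of (cj P q r) := by
  simp [cjAb]

lemma cjAb_mem (p : P) (x : Abelianization P) : cjAb P (p : Q) x = x := by
  induction x using QuotientGroup.induction_on with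
  | H r =>
    change cjAb P (p : Q) (Abelianization.of r) = Abelianization.of r
    rw [cjAb_of, cj_mem, map_mul, map_mul, map_inv, mul_right_comm, inv_mul_cancel, one_mul]

lemma cjAb_one (x : Abelianization P) : cjAb P 1 x = x := cjAb_mem P 1 x

lemma cjAb_cjAb (q s : Q) (x : Abelianization P) :
    cjAb P s (cjAb P q x) = cjAb P (q * s) x := by
  induction x using QuotientGroup.induction_on with
  | H r =>
    change cjAb P s (cjAb P q (Abelianization.of r)) = cjAb P (q * s) (Abelianization.of r)
    simp [cj_cj]

/-- The crossed module `P × (Q ⧸ P → P^{ab}) → Q`, `(p, a) ↦ p`, with `Q` acting by conjugation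
on both factors and by translation on the index set `Q ⧸ P`. -/
def model : CrossedModule (P × (Q ⧸ P → Abelianization P)) Q where
  μ := P.subtype.comp (MonoidHom.fst _ _)
  act m q := (cj P q m.1, fun t => cjAb P q (m.2 (t * (q : Q ⧸ P)⁻¹)))
  act_mul m n q := by ext <;> simp
  act_one m := by
    refine Prod.ext (cj_one P _) (funext fun t => ?_)
    simp [cjAb_one]
  act_act m q s := by
    refine Prod.ext (cj_cj P _ _ _) (funext fun t => ?_)
    simp [cjAb_cjAb, mul_assoc]
  cm1 m q := by simp
  cm2 m n := by
    refine Prod.ext (cj_mem P _ _) (funext fun t => ?_)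
    have h : ((m.1 : Q) : Q ⧸ P) = 1 := (QuotientGroup.eq_one_iff _).2 m.1.2
    simp [h, cjAb_mem, mul_right_comm]

open Classical in
/-- The homomorphism `p ↦ (p, [p] at the coset 1)` from `P` to the model. -/
noncomputable def toModel : P →* P × (Q ⧸ P → Abelianization P) :=
  (MonoidHom.id P).prod
    ((MonoidHom.mulSingle (fun _ : Q ⧸ P => Abelianization P) 1).comp Abelianization.of)

lemma toModel_isMorphism :
    CrossedModule.IsMorphism (conjCM P) (model P) (toModel P) P.subtype := by
  classical
  refine ⟨fun m => rfl, fun m p => Prod.ext (cj_mem P p m).symm (funext fun t => ?_)⟩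
  have h : ((p : Q) : Q ⧸ P) = 1 := (QuotientGroup.eq_one_iff _).2 p.2
  change Pi.mulSingle (M := fun _ : Q ⧸ P => Abelianization P) 1 (Abelianization.of (p⁻¹ * m * p)) t =
    cjAb P p (Pi.mulSingle (M := fun _ : Q ⧸ P => Abelianization P) 1 (Abelianization.of m) (t * ((p : Q) : Q ⧸ P)⁻¹))
  rw [h, cjAb_mem, map_mul, map_mul, map_inv, mul_right_comm, inv_mul_cancel, one_mul]
  simp

/-! ### The central homomorphisms `θ` and the inverse map -/

variable {P} {I : Type u} [Group I] (Y : CrossedModule I Q) (j : P →* I)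

/-- The copy `r ↦ j (q * r * q⁻¹) ^ q` of `P` in `I` attached to `q`, normalised so that its
boundary is `r`. -/
def J (q : Q) : P →* I := (actHom Y q).comp (j.comp (cj P q⁻¹))

lemma J_apply (q : Q) (r : P) : J Y j q r = Y.act (j (cj P q⁻¹ r)) q := rfl

lemma act_eq_J (q : Q) (p : P) : Y.act (j p) q = J Y j q (cj P q p) := by
  rw [J_apply, cj_cj, mul_inv_cancel, cj_one]

lemma J_one (r : P) : J Y j 1 r = j r := by
  rw [J_apply, Y.act_one, inv_one, cj_one]

variable {Y j}

lemma μ_J (hj : CrossedModule.IsMorphism (conjCM P) Y j P.subtype)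
    (q : Q) (r : P) : Y.μ (J Y j q r) = r := by
  rw [J_apply, Y.cm1, hj.1]
  simp [conjCM, mul_assoc]

lemma J_mul_left (hj : CrossedModule.IsMorphism (conjCM P) Y j P.subtype)
    (p : P) (q : Q) (r : P) : J Y j (p * q) r = J Y j q r := by
  have h := hj.2 (cj P (p * q)⁻¹ r) p
  rw [J_apply, J_apply, ← Y.act_act]
  rw [Subgroup.subtype_apply] at h
  rw [← h]
  congr 2
  ext
  simp [conjCM, mul_assoc]

lemma J_congr (hj : CrossedModule.IsMorphism (conjCM P) Y j P.subtype)
    {q s : Q} (h : (q : Q ⧸ P) = s) (r : P) : J Y j q r = J Y j s r := by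
  have hm : q * s⁻¹ ∈ P := by
    rw [← QuotientGroup.eq_one_iff]
    simp [h]
  have := J_mul_left hj ⟨q * s⁻¹, hm⟩ s r
  simpa using this

lemma mem_center_of_μ_eq_one {x : I} (hx : Y.μ x = 1) : x ∈ Subgroup.center I := by
  rw [Subgroup.mem_center_iff]
  intro n
  have h := Y.cm2 x n
  rw [hx, Y.act_one] at h
  calc n * x = x * (x⁻¹ * n * x) := by group
    _ = x * n := by rw [← h]

/-- The homomorphism `r ↦ (j r)⁻¹ * J q r` from `P` to the centre of `I`. -/
def θ (hj : CrossedModule.IsMorphism (conjCM P) Y j P.subtype) (q : Q) :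
    P →* Subgroup.center I :=
  have hc : ∀ r : P, (j r)⁻¹ * J Y j q r ∈ Subgroup.center I := fun r =>
    mem_center_of_μ_eq_one (Y := Y) (by
      have h1 := μ_J hj 1 r
      rw [J_one] at h1
      rw [map_mul, map_inv, μ_J hj, h1, inv_mul_cancel])
  MonoidHom.mk' (fun r => ⟨(j r)⁻¹ * J Y j q r, hc r⟩) (fun r s => by
    ext
    have h := Subgroup.mem_center_iff.1 (hc r) (j s)⁻¹
    simp only [map_mul, mul_inv_rev, Subgroup.coe_mul]
    calc (j s)⁻¹ * (j r)⁻¹ * (J Y j q r * J Y j q s)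
        = ((j s)⁻¹ * ((j r)⁻¹ * J Y j q r)) * J Y j q s := by group
      _ = _ := by rw [h]; group)

lemma coe_θ (hj : CrossedModule.IsMorphism (conjCM P) Y j P.subtype) (q : Q) (r : P) :
    (θ hj q r : I) = (j r)⁻¹ * J Y j q r := rfl

section Back

open scoped IsMulCommutative

variable [Fintype (Q ⧸ P)] [DecidableEq (Q ⧸ P)]

/-- The product over the nontrivial cosets of the maps induced on `P^{ab}` by `θ`. -/
noncomputable def Ψ (hj : CrossedModule.IsMorphism (conjCM P) Y j P.subtype) :
    ({t : Q ⧸ P // t ≠ 1} → Abelianization P) →* Subgroup.center I :=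
  ∏ t : {t : Q ⧸ P // t ≠ 1},
    (Abelianization.lift (θ hj (t.1).out)).comp (Pi.evalMonoidHom _ t)

lemma Ψ_mulSingle (hj : CrossedModule.IsMorphism (conjCM P) Y j P.subtype)
    (t : {t : Q ⧸ P // t ≠ 1}) (r : P) :
    Ψ hj (Pi.mulSingle t (Abelianization.of r)) = θ hj (t.1).out r := by
  rw [Ψ, MonoidHom.finsetProd_apply, Finset.prod_eq_single t]
  · simp
  · intro b _ hb
    simp [Pi.mulSingle_eq_of_ne hb]
  · simp

/-- The map `(p, a) ↦ j p * ∏ t ≠ 1, θ t (a t)`, the inverse of `forth`. -/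
noncomputable def back (hj : CrossedModule.IsMorphism (conjCM P) Y j P.subtype) :
    P × ({t : Q ⧸ P // t ≠ 1} → Abelianization P) →* I :=
  MonoidHom.noncommCoprod j ((Subgroup.center I).subtype.comp (Ψ hj))
    (fun p a => Subgroup.mem_center_iff.1 (Ψ hj a).2 (j p))

lemma back_one (hj : CrossedModule.IsMorphism (conjCM P) Y j P.subtype) (p : P) :
    back hj (p, 1) = j p := by
  change j p * (Ψ hj 1 : I) = j p
  rw [map_one, Subgroup.coe_one, mul_one]

end Back

end InducedNormal

open InducedNormal in
/-- Let `P` be a normal subgroup of finite index `n = [Q : P]` in `Q`, and consider the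
identity crossed module on `P` and the inclusion `ι : P → Q`.  Then for any induced crossed
module `(∂ : I → Q, j)` of `(id_P : P → P)` along `ι`, there is a group isomorphism
`I ≅ P × (P^{ab})^{n-1}`. -/
theorem induced_identity_of_normal {Q : Type u} [Group Q] (P : Subgroup Q)
    [hPQ : P.Normal] [hfin : P.FiniteIndex]
    {I : Type u} [Group I] (Y : CrossedModule I Q) (j : ↥P →* I)
    (hInd : IsInducedCrossedModule (conjCM ↥P) P.subtype Y j) :
    Nonempty (I ≃* ↥P × (Fin (P.index - 1) → Abelianization ↥P)) := by
  classical
  have : Fintype (Q ⧸ P) := Fintype.ofFinite _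
  have hj := hInd.1
  obtain ⟨Φ, ⟨-, hΦact, hΦj⟩, -⟩ := hInd.2 _ (model P) (toModel P) (toModel_isMorphism P)
  have hΦJ : ∀ (q : Q) (r : P),
      Φ (J Y j q r) = (r, Pi.mulSingle (q : Q ⧸ P) (Abelianization.of r)) := by
    intro q r
    rw [J_apply, hΦact, hΦj]
    refine Prod.ext ?_ (funext fun t => ?_)
    · change cj P q (cj P q⁻¹ r) = r
      rw [cj_cj, inv_mul_cancel, cj_one]
    · change cjAb P q (Pi.mulSingle (M := fun _ : Q ⧸ P => Abelianization P) 1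
        (Abelianization.of (cj P q⁻¹ r))
        (t * (q : Q ⧸ P)⁻¹)) =
        Pi.mulSingle (M := fun _ : Q ⧸ P => Abelianization P) q (Abelianization.of r) t
      by_cases ht : t = q
      · subst ht
        simp [cj_cj, cj_one]
      · have ht' : t * (q : Q ⧸ P)⁻¹ ≠ 1 := fun h => ht (mul_inv_eq_one.1 h)
        rw [Pi.mulSingle_eq_of_ne ht, Pi.mulSingle_eq_of_ne ht', map_one]
  let res : (Q ⧸ P → Abelianization P) →* ({t : Q ⧸ P // t ≠ 1} → Abelianization P) :=
    MonoidHom.mk' (fun a t => a t.1) (fun _ _ => rfl)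
  let forth : I →* P × ({t : Q ⧸ P // t ≠ 1} → Abelianization P) :=
    ((MonoidHom.id P).prodMap res).comp Φ
  have forth_J : ∀ (q : Q) (r : P), forth (J Y j q r) =
      (r, fun t => Pi.mulSingle (M := fun _ : Q ⧸ P => Abelianization P) q
        (Abelianization.of r) t.1) := by
    intro q r
    change ((MonoidHom.id P).prodMap res) (Φ (J Y j q r)) = _
    rw [hΦJ]
    rfl
  have forth_J_one : ∀ (q : Q) (r : P), (q : Q ⧸ P) = 1 → forth (J Y j q r) = (r, 1) := by
    intro q r hq
    rw [forth_J, hq]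
    exact Prod.ext rfl (funext fun t => Pi.mulSingle_eq_of_ne t.2 _)
  have forth_J_ne : ∀ (t : {t : Q ⧸ P // t ≠ 1}) (q : Q) (r : P), (q : Q ⧸ P) = t.1 →
      forth (J Y j q r) = (r, Pi.mulSingle t (Abelianization.of r)) := by
    intro t q r hq
    rw [forth_J, hq]
    refine Prod.ext rfl (funext fun s => ?_)
    by_cases hs : s = t
    · subst hs; simp
    · change _ = Pi.mulSingle (M := fun _ : {t : Q ⧸ P // t ≠ 1} => Abelianization P) t
        (Abelianization.of r) s
      rw [Pi.mulSingle_eq_of_ne hs]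
      exact Pi.mulSingle_eq_of_ne (fun h => hs (Subtype.ext h)) _
  have forth_j : ∀ r, forth (j r) = (r, 1) := fun r => by
    rw [← J_one Y j]
    exact forth_J_one 1 r rfl
  have hleft : (back hj).comp forth = MonoidHom.id I := by
    refine MonoidHom.eq_of_eqOn_dense (closure_eq_top hInd) ?_
    rintro _ ⟨⟨p, q⟩, rfl⟩
    change back hj (forth (Y.act (j p) q)) = Y.act (j p) q
    rw [act_eq_J]
    generalize cj P q p = r
    by_cases hq : (q : Q ⧸ P) = 1
    · rw [forth_J_one q r hq, J_congr hj (s := 1) hq, J_one, back_one]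
    · rw [forth_J_ne ⟨q, hq⟩ q r rfl]
      have hout : ((q : Q ⧸ P).out : Q ⧸ P) = q := QuotientGroup.out_eq' _
      change j r * (Ψ hj (Pi.mulSingle ⟨(q : Q ⧸ P), hq⟩ (Abelianization.of r)) : I) = _
      rw [Ψ_mulSingle, coe_θ, mul_inv_cancel_left]
      exact J_congr hj hout r
  have hright : forth.comp (back hj) = MonoidHom.id _ := by
    have h1 : ∀ p, forth (back hj (p, 1)) = (p, 1) := fun p => by
      rw [back_one, forth_j]
    have h2 : (forth.comp (back hj)).comp (MonoidHom.inr P _) = MonoidHom.inr P _ := by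
      refine MonoidHom.pi_ext fun t x => ?_
      induction x using QuotientGroup.induction_on with
      | H r =>
        change forth (j 1 * (Ψ hj (Pi.mulSingle t (Abelianization.of r)) : I)) =
          (1, Pi.mulSingle t (Abelianization.of r))
        rw [Ψ_mulSingle, coe_θ, map_one, one_mul, map_mul, map_inv, forth_j,
          forth_J_ne t _ r (QuotientGroup.out_eq' _)]
        simp
    ext1 ⟨p, a⟩
    have ha : forth (back hj (1, a)) = (1, a) := DFunLike.congr_fun h2 a
    have hpa : ((p, a) : P × ({t : Q ⧸ P // t ≠ 1} → Abelianization P)) = (p, 1) * (1, a) := by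
      simp
    change forth (back hj (p, a)) = (p, a)
    rw [hpa, map_mul, map_mul, h1, ha]
  have hcard : Fintype.card {t : Q ⧸ P // t ≠ 1} = P.index - 1 := by
    rw [Fintype.card_subtype_compl, Fintype.card_subtype_eq, Subgroup.index, Nat.card_eq_fintype_card]
  let e : {t : Q ⧸ P // t ≠ 1} ≃ Fin (P.index - 1) := Fintype.equivFinOfCardEq hcard
  exact ⟨(MonoidHom.toMulEquiv forth (back hj) hleft hright).trans
    ((MulEquiv.refl P).prodCongr (MulEquiv.arrowCongr e (MulEquiv.refl (Abelianization P))))⟩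
end

section
/- Let Q = A₄ be the alternating group on 4 letters, let P be the cyclic subgroup of order 3 generated by the 3-cycle (1 2 3), let (id_P : P → P) be the identity crossed module on P, and let ι : P → Q be the inclusion. Then for any induced crossed module (∂ : I → Q, j) of (id_P : P → P) along ι, the group I is isomorphic to SL(2, ℤ/3ℤ) (in particular |I| = 24) and ker ∂ has order 2. -/
/-!
The induced crossed module `I` is generated by the elements `(j t) ^ q`, where `t` is the 3-cycle
and `q` runs over `A₄` (`induced_eq_top`); this uses only the uniqueness half of the universal
property. With `u` a second 3-cycle such that `t u t = u t u` and `⟨t, u⟩ = A₄`, the Peiffer rule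
CM2 shows that two of these, `a = j t` and `b = (j t) ^ (u t)`, already generate `I`, and that
`a ^ 3 = 1` and `a b a = b a b`. A group with such generators has order at most 24
(`card_le_of_braid`), being covered by four cosets of a cyclic subgroup of order dividing 6.

Conversely `SL(2, ℤ/3ℤ)` acts on the four lines of `(ℤ/3ℤ)²` by even permutations, and the
resulting map `SL(2, ℤ/3ℤ) → A₄` is a central extension with kernel `{1, -1}`. A surjection with
central kernel is a crossed module (`centralExtension`), so `SL(2, ℤ/3ℤ)` receives a morphism from
`I`. Its image contains two transvections, which generate `SL(2, ℤ/3ℤ)`; as `SL(2, ℤ/3ℤ)` has order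
`2 * 12 = 24`, the bound on `|I|` makes it an isomorphism.
-/

universe u

/-- The 3-cycle `(1 2 3)` (on `Fin 4`: `0 ↦ 1 ↦ 2 ↦ 0`) is an even permutation. -/
lemma threeCycle_mem_alternatingGroup :
    (Equiv.swap (0 : Fin 4) 2 * Equiv.swap 0 1) ∈ alternatingGroup (Fin 4) := by
  simp [Equiv.Perm.mem_alternatingGroup]

/-! ### Crossed modules -/

/-- Conjugation by `g` depends only on the image of `g` under a map with central kernel. -/
lemma conj_eq_of_map_eq {G Q : Type*} [Group G] [Group Q] (π : G →* Q)
    (hc : π.ker ≤ Subgroup.center G) {g h : G} (e : π g = π h) (m : G) :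
    g⁻¹ * m * g = h⁻¹ * m * h := by
  have hk : g * h⁻¹ ∈ Subgroup.center G := hc (by simp [MonoidHom.mem_ker, e])
  have := Subgroup.mem_center_iff.1 hk m
  calc g⁻¹ * m * g = g⁻¹ * (m * (g * h⁻¹)) * h := by group
    _ = h⁻¹ * m * h := by rw [this]; group

/-- A surjection `π : G → Q` with central kernel, as a crossed module: `q` acts on `G` as
conjugation by any preimage of `q`. -/
noncomputable def centralExtension {G Q : Type u} [Group G] [Group Q] (π : G →* Q)
    (hs : Function.Surjective π) (hc : π.ker ≤ Subgroup.center G) : CrossedModule G Q where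
  μ := π
  act m q := (Function.surjInv hs q)⁻¹ * m * Function.surjInv hs q
  act_mul m n p := by group
  act_one m := by
    rw [conj_eq_of_map_eq π hc (h := 1) ((Function.surjInv_eq hs 1).trans (map_one π).symm)]; group
  act_act m p q := by
    rw [conj_eq_of_map_eq π hc (g := Function.surjInv hs (p * q))
      (h := Function.surjInv hs p * Function.surjInv hs q) (by simp [Function.surjInv_eq])]
    group
  cm1 m p := by simp [Function.surjInv_eq]
  cm2 m n := conj_eq_of_map_eq π hc (Function.surjInv_eq hs _) n

/-- A subgroup stable under the action is a crossed module in its own right. -/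
def CrossedModule.restrict {M P : Type u} [Group M] [Group P] (Y : CrossedModule M P)
    (S : Subgroup M) (hS : ∀ x ∈ S, ∀ q, Y.act x q ∈ S) : CrossedModule S P where
  μ := Y.μ.comp S.subtype
  act m p := ⟨Y.act m p, hS m m.2 p⟩
  act_mul m n p := Subtype.ext (Y.act_mul m n p)
  act_one m := Subtype.ext (Y.act_one m)
  act_act m p q := Subtype.ext (Y.act_act m p q)
  cm1 m p := Y.cm1 m p
  cm2 m n := Subtype.ext (Y.cm2 m n)

/-- An induced crossed module is generated, under the action, by the image of `j`: the retraction
onto a stable subgroup given by the universal property must be the identity. -/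
lemma induced_eq_top {M P Q I : Type u} [Group M] [Group P] [Group Q] [Group I]
    {X : CrossedModule M P} {ι : P →* Q} {Y : CrossedModule I Q} {j : M →* I}
    (h : IsInducedCrossedModule X ι Y j) (S : Subgroup I)
    (hS : ∀ x ∈ S, ∀ q, Y.act x q ∈ S) (hj : ∀ m, j m ∈ S) : S = ⊤ := by
  obtain ⟨φ, ⟨h1, h2, h3⟩, -⟩ := h.2 S (Y.restrict S hS) (j.codRestrict S hj)
    ⟨fun m => h.1.1 m, fun m p => Subtype.ext (h.1.2 m p)⟩
  have e : S.subtype.comp φ = MonoidHom.id I :=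
    (h.2 I Y j h.1).unique
      ⟨fun x => h1 x, fun x q => congrArg Subtype.val (h2 x q),
        fun m => congrArg Subtype.val (h3 m)⟩
      ⟨fun _ => rfl, fun _ _ => rfl, fun _ => rfl⟩
  refine eq_top_iff.2 fun x _ => ?_
  have hx : ((φ x : S) : I) = x := DFunLike.congr_fun e x
  exact hx ▸ (φ x).2

/-- A subgroup containing `a` and `b` is stable under the action of `μ a` and `μ b`, since by CM2
these act as conjugation by `a` and `b`. -/
lemma act_mem_of_closure {M P : Type u} [Group M] [Group P] (Y : CrossedModule M P)
    (a b : M) (hgen : Subgroup.closure {Y.μ a, Y.μ b} = ⊤) (S : Subgroup M)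
    (ha : a ∈ S) (hb : b ∈ S) : ∀ x ∈ S, ∀ q, Y.act x q ∈ S := by
  -- An equivalence, so that the property passes to inverses of `q`.
  have key : ∀ q : P, ∀ x, Y.act x q ∈ S ↔ x ∈ S := by
    intro q
    have hq : q ∈ Subgroup.closure {Y.μ a, Y.μ b} := hgen ▸ Subgroup.mem_top q
    have conj : ∀ c ∈ S, ∀ x, Y.act x (Y.μ c) ∈ S ↔ x ∈ S := fun c hc x => by
      rw [Y.cm2, S.mul_mem_cancel_right hc, S.mul_mem_cancel_left (S.inv_mem hc)]
    induction hq using Subgroup.closure_induction with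
    | mem y hy =>
      rcases hy with rfl | rfl
      exacts [conj a ha, conj b hb]
    | one => intro x; rw [Y.act_one]
    | mul y z _ _ hy hz => intro x; rw [← Y.act_act, hz, hy]
    | inv y _ hy => intro x; rw [← hy, Y.act_act, inv_mul_cancel, Y.act_one]
  exact fun x hx q => (key q x).2 hx

/-! ### Groups generated by two braided elements of order three -/

section Braid

variable {G : Type*} [Group G] {a b : G}

/-- For braided `a` and `b` with `a ^ 3 = 1`, the square of the Garside element `a b a`. -/
lemma garside_sq (ha : a ^ 3 = 1) (hab : a * b * a = b * a * b) :
    (a * b * a) ^ 2 = (b * a⁻¹) ^ 2 := by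
  have hi : a * a = a⁻¹ := by
    rw [eq_inv_iff_mul_eq_one, ← ha, pow_succ, pow_two]
  have hca : a * (a * b * a) ^ 2 = (a * b * a) ^ 2 * a := by
    have h1 : a * (a * b * a) = (a * b * a) * b := by
      nth_rw 1 [hab]; simp only [mul_assoc]
    have h2 : b * (a * b * a) = (a * b * a) * a := by
      nth_rw 2 [hab]; simp only [mul_assoc]
    rw [pow_two, ← mul_assoc, h1, mul_assoc, h2]; simp only [mul_assoc]
  calc (a * b * a) ^ 2 = a⁻¹ * ((a * b * a) ^ 2 * a) := by rw [← hca]; group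
    _ = b * (a * a) * b * (a * a) := by simp only [pow_two]; group
    _ = (b * a⁻¹) ^ 2 := by rw [hi, pow_two]; group

/-- In the quotient of the braid group on three strands by the cubes of its generators, the centre
is generated by the image of the full twist `(a b a) ^ 2`, whose square is trivial: exchanging the
braided elements `a` and `b` turns `garside_sq` into an expression for its inverse. -/
lemma garside_pow_four (ha : a ^ 3 = 1) (hab : a * b * a = b * a * b) :
    (a * b * a) ^ 4 = 1 := by
  have hb : b ^ 3 = 1 := by
    have : b = (a * b * a) * a * (a * b * a)⁻¹ := by
      rw [eq_mul_inv_iff_mul_eq]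
      calc b * (a * b * a) = b * a * b * a := by simp only [mul_assoc]
        _ = a * b * a * a := by rw [hab]
    rw [this, conj_pow, ha]; group
  have h1 := garside_sq ha hab
  have h2 := garside_sq hb hab.symm
  rw [← hab] at h2
  calc (a * b * a) ^ 4 = (a * b * a) ^ 2 * (a * b * a) ^ 2 := by rw [← pow_add]
    _ = (b * a⁻¹) ^ 2 * (a * b⁻¹) ^ 2 := by nth_rw 1 [h1]; rw [h2]
    _ = 1 := by simp only [pow_two]; group

/-- Two braided elements of order dividing three generate a group of order at most 24: it is the
union of the left cosets of `⟨a, z⟩` represented by `1`, `b`, `a b` and `a² b`, where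
`z = (a b a) ^ 2` is central of order at most 2. -/
lemma card_le_of_braid (ha : a ^ 3 = 1) (hab : a * b * a = b * a * b)
    (hgen : Subgroup.closure {a, b} = ⊤) : Finite G ∧ Nat.card G ≤ 24 := by
  have hi : a * a = a⁻¹ := by rw [eq_inv_iff_mul_eq_one, ← ha, pow_succ, pow_two]
  have h1 : a * (a * b * a) = (a * b * a) * b := by
    nth_rw 1 [hab]; simp only [mul_assoc]
  have h2 : b * (a * b * a) = (a * b * a) * a := by
    nth_rw 2 [hab]; simp only [mul_assoc]
  have hb : b ^ 3 = 1 := by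
    have : b = (a * b * a) * a * (a * b * a)⁻¹ := by
      rw [eq_mul_inv_iff_mul_eq, h2]
    rw [this, conj_pow, ha]; group
  have hbi : b * b = b⁻¹ := by rw [eq_inv_iff_mul_eq_one, ← hb, pow_succ, pow_two]
  have hz : (a * b * a) ^ 2 = b * a⁻¹ * b * a⁻¹ := by
    rw [garside_sq ha hab, pow_two]; simp only [mul_assoc]
  have hza : Commute a ((a * b * a) ^ 2) := by
    rw [commute_iff_eq, pow_two, ← mul_assoc, h1, mul_assoc, h2]; simp only [mul_assoc]
  have hz2 : (a * b * a) ^ 2 * (a * b * a) ^ 2 = 1 := by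
    rw [← pow_add]; exact garside_pow_four ha hab
  generalize (a * b * a) ^ 2 = z at *
  -- `⟨a, z⟩` is cyclic, generated by `a * z`.
  set H := Subgroup.zpowers (a * z) with hH
  have h6 : (a * z) ^ 6 = 1 := by
    rw [hza.mul_pow, show 6 = 3 * 2 by rfl, pow_mul, ha, mul_comm 3 2, pow_mul, pow_two z, hz2]
    simp
  have haH : a ∈ H := ⟨4, by
    change (a * z) ^ (4 : ℤ) = a
    rw [show (4 : ℤ) = ((4 : ℕ) : ℤ) by rfl, zpow_natCast, hza.mul_pow, pow_succ, ha,
      show 4 = 2 * 2 by rfl, pow_mul, pow_two z, hz2]; simp⟩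
  have hzH : z ∈ H := by
    have := H.mul_mem (H.inv_mem haH) (Subgroup.mem_zpowers (a * z))
    rwa [inv_mul_cancel_left] at this
  have hHf : IsOfFinOrder (a * z) := isOfFinOrder_iff_pow_eq_one.2 ⟨6, by norm_num, h6⟩
  have hHfin : Finite H := hHf.finite_zpowers
  have hHcard : Nat.card H ≤ 6 := by
    rw [hH, Nat.card_zpowers]; exact Nat.le_of_dvd (by norm_num) (orderOf_dvd_of_pow_eq_one h6)
  let f : Fin 4 × H → G := fun p => ![1, b, a * b, a * a * b] p.1 * p.2
  have hf : ∀ x, x ∈ Set.range f ↔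
      ∃ h ∈ H, x = h ∨ x = b * h ∨ x = a * b * h ∨ x = a * a * b * h := by
    intro x
    constructor
    · rintro ⟨⟨i, h⟩, rfl⟩
      refine ⟨h, h.2, ?_⟩
      fin_cases i <;> simp [f]
    · rintro ⟨h, hh, e | rfl | rfl | rfl⟩
      exacts [⟨(0, ⟨h, hh⟩), by simp [f, e]⟩, ⟨(1, ⟨h, hh⟩), by simp [f]⟩,
        ⟨(2, ⟨h, hh⟩), by simp [f]⟩, ⟨(3, ⟨h, hh⟩), by simp [f]⟩]
  have hfa : ∀ x ∈ Set.range f, a * x ∈ Set.range f := by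
    intro x hx
    rw [hf] at hx ⊢
    obtain ⟨h, hh, e | rfl | rfl | rfl⟩ := hx
    · exact ⟨a * h, H.mul_mem haH hh, .inl (by rw [e])⟩
    · exact ⟨h, hh, .inr (.inr (.inl (by group)))⟩
    · exact ⟨h, hh, .inr (.inr (.inr (by simp only [mul_assoc])))⟩
    · exact ⟨h, hh, .inr (.inl (by rw [hi]; group))⟩
  have hfb : ∀ x ∈ Set.range f, b * x ∈ Set.range f := by
    intro x hx
    rw [hf] at hx ⊢
    obtain ⟨h, hh, e | rfl | rfl | rfl⟩ := hx
    · exact ⟨h, hh, .inr (.inl (by rw [e]))⟩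
    · refine ⟨a⁻¹ * z * h, H.mul_mem (H.mul_mem (H.inv_mem haH) hzH) hh, .inr (.inr (.inr ?_))⟩
      -- `b² = b⁻¹ = a⁻¹ b a⁻¹ z`, by `z = (b a⁻¹)²` and `z² = 1`.
      have e : a⁻¹ * b * a⁻¹ = b⁻¹ * z := by rw [hz]; group
      rw [← mul_assoc, hbi, hi]
      simp only [← mul_assoc]
      rw [e, mul_assoc b⁻¹, hz2, mul_one]
    · refine ⟨a * h, H.mul_mem haH hh, .inr (.inr (.inl ?_))⟩
      simp only [← mul_assoc]; rw [hab]
    · refine ⟨z * a * h, H.mul_mem (H.mul_mem hzH haH) hh, .inl ?_⟩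
      rw [hi, hz]; group
  have hsurj : Function.Surjective f := by
    intro x
    have hx : x ∈ Subgroup.closure {a, b} := hgen ▸ Subgroup.mem_top x
    induction hx using Subgroup.closure_induction_left with
    | one => exact (hf 1).2 ⟨1, H.one_mem, .inl rfl⟩
    | mul_left x hx y hy ih =>
      rcases hx with rfl | rfl
      exacts [hfa _ ih, hfb _ ih]
    | inv_mul_cancel x hx y hy ih =>
      rcases hx with rfl | rfl
      · rw [← hi, mul_assoc]; exact hfa _ (hfa _ ih)
      · rw [← hbi, mul_assoc]; exact hfb _ (hfb _ ih)
  refine ⟨Finite.of_surjective f hsurj, (Nat.card_le_card_of_surjective f hsurj).trans ?_⟩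
  rw [Nat.card_prod, Nat.card_fin]
  omega

end Braid

/-! ### The central extension of the alternating group by the special linear group -/

open Matrix

/-- Coordinate `x / y` in `{0, 1, 2, ∞}` of the line spanned by `(x, y)`; `∞` is `3 : Fin 4`, and
`x / y = x * y` since `y = ±1`. The zero vector gets the junk value `3`. -/
def lineIdx (x y : ZMod 3) : Fin 4 := if y = 0 then 3 else ![0, 1, 2] (x * y)

/-- First coordinate of the chosen spanning vector of the `i`-th line. -/
def repX : Fin 4 → ZMod 3 := ![0, 1, 2, 1]

/-- Second coordinate of the chosen spanning vector of the `i`-th line. -/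
def repY : Fin 4 → ZMod 3 := ![1, 1, 1, 0]

/-- The action of the matrix with rows `(a, b)` and `(c, d)` on the four lines. -/
def lineAct (a b c d : ZMod 3) (i : Fin 4) : Fin 4 :=
  lineIdx (a * repX i + b * repY i) (c * repX i + d * repY i)

/-- The chosen spanning vector of the line through a nonzero `v` is `v` or `-v`. -/
lemma rep_lineIdx : ∀ x y : ZMod 3, (x = 0 ∧ y = 0) ∨
    (repX (lineIdx x y) = x ∧ repY (lineIdx x y) = y) ∨
    (repX (lineIdx x y) = -x ∧ repY (lineIdx x y) = -y) := by decide

lemma lineIdx_neg : ∀ x y : ZMod 3, lineIdx (-x) (-y) = lineIdx x y := by decide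

lemma lineIdx_rep : ∀ i, lineIdx (repX i) (repY i) = i := by decide

lemma rep_image_ne_zero : ∀ a b c d : ZMod 3, a * d - b * c = 1 → ∀ i,
    ¬ (a * repX i + b * repY i = 0 ∧ c * repX i + d * repY i = 0) := by decide

lemma eq_one_or_neg_one_of_lineAct : ∀ a b c d : ZMod 3, a * d - b * c = 1 →
    (∀ i, lineAct a b c d i = i) →
    (a = 1 ∧ b = 0 ∧ c = 0 ∧ d = 1) ∨ (a = -1 ∧ b = 0 ∧ c = 0 ∧ d = -1) := by decide

/-- The group `SL(2, ℤ/3ℤ)`. -/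
abbrev SL23 := SpecialLinearGroup (Fin 2) (ZMod 3)

lemma SL23.det_eq (g : SL23) : g 0 0 * g 1 1 - g 0 1 * g 1 0 = 1 := by
  rw [← Matrix.det_fin_two]; exact g.2

/-- `SL(2, ℤ/3ℤ)` acting on the four lines of `(ℤ/3ℤ)²`. -/
instance lineMulAction : MulAction SL23 (Fin 4) where
  smul g i := lineAct (g 0 0) (g 0 1) (g 1 0) (g 1 1) i
  one_smul i := by
    change lineAct ((1 : SL23) 0 0) _ _ _ i = i
    simp [lineAct, lineIdx_rep]
  mul_smul g h i := by
    change lineAct ((g * h) 0 0) ((g * h) 0 1) ((g * h) 1 0) ((g * h) 1 1) i =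
      lineAct _ _ _ _ (lineAct _ _ _ _ i)
    have e : ∀ k l, (g * h) k l = g k 0 * h 0 l + g k 1 * h 1 l := fun k l => by
      simp [Matrix.mul_apply, Fin.sum_univ_two]
    simp only [e]
    unfold lineAct
    rcases rep_lineIdx (h 0 0 * repX i + h 0 1 * repY i) (h 1 0 * repX i + h 1 1 * repY i) with
      h0 | ⟨h1, h2⟩ | ⟨h1, h2⟩
    · exact absurd h0 (rep_image_ne_zero _ _ _ _ h.det_eq i)
    · rw [h1, h2]; congr 1 <;> ring
    · rw [h1, h2, ← lineIdx_neg]; congr 1 <;> ring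

/-- The transvection `[1, 1; 0, 1]`. -/
def matA : SL23 := ⟨!![1, 1; 0, 1], by decide⟩

/-- The transvection `[1, 0; -1, 1]`. -/
def matU : SL23 := ⟨!![1, 0; -1, 1], by decide⟩

lemma matA_pow : matA ^ 3 = 1 := by decide
lemma matU_pow : matU ^ 3 = 1 := by decide
lemma mat_braid : matA * matU * matA = matU * matA * matU := by decide

lemma sl_decomp : ∀ a b c d : ZMod 3, a * d - b * c = 1 → ∃ i j k l : Fin 3,
    !![a, b; c, d] = (matA ^ (i : ℕ) * matU ^ (j : ℕ) * matA ^ (k : ℕ) * matU ^ (l : ℕ)).1 := by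
  decide

lemma closure_mat : Subgroup.closure {matA, matU} = ⊤ := by
  refine eq_top_iff.2 fun g _ => ?_
  obtain ⟨i, j, k, l, h⟩ := sl_decomp _ _ _ _ g.det_eq
  have hg : g = matA ^ (i : ℕ) * matU ^ (j : ℕ) * matA ^ (k : ℕ) * matU ^ (l : ℕ) :=
    Subtype.ext ((Matrix.eta_fin_two _).trans h)
  have hA : matA ∈ Subgroup.closure {matA, matU} := Subgroup.subset_closure (by simp)
  have hU : matU ∈ Subgroup.closure {matA, matU} := Subgroup.subset_closure (by simp)
  rw [hg]
  exact mul_mem (mul_mem (mul_mem (pow_mem hA _) (pow_mem hU _)) (pow_mem hA _)) (pow_mem hU _)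

/-- The action on the four lines is by even permutations, as the generators have order three. -/
lemma perm_even (g : SL23) : MulAction.toPermHom SL23 (Fin 4) g ∈ alternatingGroup (Fin 4) := by
  have cube : ∀ s : ℤˣ, s ^ 3 = 1 → s = 1 := by decide
  have hle : Subgroup.closure {matA, matU} ≤
      (Equiv.Perm.sign.comp (MulAction.toPermHom SL23 (Fin 4))).ker := by
    rw [Subgroup.closure_le]
    rintro x (rfl | rfl)
    · exact cube _ (by rw [← map_pow, matA_pow, map_one])
    · exact cube _ (by rw [← map_pow, matU_pow, map_one])
  exact hle (closure_mat ▸ Subgroup.mem_top g)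

/-- The action on the four lines, as a homomorphism to `A₄`. -/
def toA4 : SL23 →* alternatingGroup (Fin 4) :=
  (MulAction.toPermHom SL23 (Fin 4)).codRestrict _ perm_even

/-- `A₄` is doubly transitive and `⟨t⟩` is a point stabiliser, so `A₄` is the union of the double
cosets `⟨t⟩` and `⟨t⟩ u ⟨t⟩`, where `t` and `u` are the images of `matA` and `matU`. -/
lemma A4_decomp : ∀ q : alternatingGroup (Fin 4), ∃ i j k : Fin 3,
    q = toA4 matA ^ (i : ℕ) * toA4 matU ^ (j : ℕ) * toA4 matA ^ (k : ℕ) := by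
  decide +kernel

lemma closure_A4 : Subgroup.closure {toA4 matA, toA4 matU} = ⊤ := by
  refine eq_top_iff.2 fun q _ => ?_
  obtain ⟨i, j, k, hq⟩ := A4_decomp q
  have hA : toA4 matA ∈ Subgroup.closure {toA4 matA, toA4 matU} :=
    Subgroup.subset_closure (by simp)
  have hU : toA4 matU ∈ Subgroup.closure {toA4 matA, toA4 matU} :=
    Subgroup.subset_closure (by simp)
  rw [hq]
  exact mul_mem (mul_mem (pow_mem hA _) (pow_mem hU _)) (pow_mem hA _)

lemma toA4_surjective : Function.Surjective toA4 := fun q => by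
  obtain ⟨i, j, k, hq⟩ := A4_decomp q
  exact ⟨matA ^ (i : ℕ) * matU ^ (j : ℕ) * matA ^ (k : ℕ), by simp only [hq, map_mul, map_pow]⟩

lemma mem_ker_toA4 (g : SL23) : g ∈ toA4.ker ↔ g = 1 ∨ g = -1 := by
  constructor
  · intro h
    have hfix : ∀ i, lineAct (g 0 0) (g 0 1) (g 1 0) (g 1 1) i = i := fun i =>
      DFunLike.congr_fun (congrArg Subtype.val h) i
    rcases eq_one_or_neg_one_of_lineAct _ _ _ _ g.det_eq hfix with
      ⟨h1, h2, h3, h4⟩ | ⟨h1, h2, h3, h4⟩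
    · left; ext i j; fin_cases i <;> fin_cases j <;> simp [h1, h2, h3, h4]
    · right; ext i j; fin_cases i <;> fin_cases j <;> simp [h1, h2, h3, h4]
  · have h1 : toA4 (-1) = 1 := by decide
    rintro (rfl | rfl)
    exacts [one_mem _, h1]

lemma ker_toA4_le_center : toA4.ker ≤ Subgroup.center SL23 := by
  intro g hg
  rw [Subgroup.mem_center_iff]
  rcases (mem_ker_toA4 g).1 hg with rfl | rfl <;> simp

lemma card_A4 : Nat.card (alternatingGroup (Fin 4)) = 12 := by
  rw [nat_card_alternatingGroup]; simp [Nat.factorial]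

lemma card_SL23 : Nat.card SL23 = 24 := by
  have hk : Nat.card toA4.ker = 2 := by
    have hs : (toA4.ker : Set SL23) = {1, -1} := by
      ext g; simpa using mem_ker_toA4 g
    have hne : (1 : SL23) ≠ -1 := by decide
    rw [← SetLike.coe_sort_coe, hs, Nat.card_coe_set_eq, Set.ncard_pair hne]
  rw [← toA4.ker.card_mul_index, Subgroup.index_ker, MonoidHom.range_eq_top.2 toA4_surjective,
    Subgroup.card_top, hk, card_A4]

/-! ### The induced crossed module -/

/-- The 3-cycle `(1 2 3)` is the image of the transvection `matA`. -/
lemma toA4_matA : toA4 matA = ⟨Equiv.swap (0 : Fin 4) 2 * Equiv.swap 0 1,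
    threeCycle_mem_alternatingGroup⟩ := by decide

/-- Let `Q = A₄`, `P` the cyclic subgroup of order 3 generated by the 3-cycle `(1 2 3)`,
and consider the identity crossed module on `P` and the inclusion `ι : P → Q`.  For any
induced crossed module `(∂ : I → Q, j)` of `(id_P : P → P)` along `ι`, the group `I` is
isomorphic to `SL(2, ℤ/3ℤ)` (in particular `|I| = 24`) and `ker ∂` has order 2. -/
theorem induced_C3_A4 (P : Subgroup ↥(alternatingGroup (Fin 4)))
    (hP : P = Subgroup.zpowers
      (⟨Equiv.swap (0 : Fin 4) 2 * Equiv.swap 0 1, threeCycle_mem_alternatingGroup⟩ :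
        ↥(alternatingGroup (Fin 4))))
    {I : Type} [Group I] (Y : CrossedModule I ↥(alternatingGroup (Fin 4))) (j : ↥P →* I)
    (hInd : IsInducedCrossedModule (conjCM ↥P) P.subtype Y j) :
    Nonempty (I ≃* Matrix.SpecialLinearGroup (Fin 2) (ZMod 3)) ∧
    Nat.card I = 24 ∧ Nat.card Y.μ.ker = 2 := by
  rw [← toA4_matA] at hP
  have ht : toA4 matA ∈ P := hP ▸ Subgroup.mem_zpowers _
  set t : P := ⟨toA4 matA, ht⟩ with ht_def
  have hgenP : ∀ x : P, x ∈ Subgroup.zpowers t := by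
    rintro ⟨x, hx⟩
    obtain ⟨k, hk⟩ := Subgroup.mem_zpowers_iff.1 (hP ▸ hx)
    exact Subgroup.mem_zpowers_iff.2 ⟨k, Subtype.ext (by simpa using hk)⟩
  have ht3 : t ^ 3 = 1 := Subtype.ext (by
    change toA4 matA ^ 3 = 1
    rw [← map_pow, matA_pow, map_one])
  -- The generators `a`, `b` of `I`; the braid relation says that `b` is `a` acted on by `u t`.
  obtain ⟨hj1, hj2⟩ := hInd.1
  set a := j t with ha_def
  set b := Y.act a (toA4 (matU * matA)) with hb_def
  have hμa : Y.μ a = toA4 matA := hj1 t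
  have hconj : (matU * matA)⁻¹ * matA * (matU * matA) = matU := by
    rw [mul_assoc, inv_mul_eq_iff_eq_mul, ← mul_assoc, mat_braid]
  have hμb : Y.μ b = toA4 matU := by
    rw [Y.cm1, hμa, ← map_inv, ← map_mul, ← map_mul, hconj]
  have ha3 : a ^ 3 = 1 := by rw [ha_def, ← map_pow, ht3, map_one]
  have hab : a * b * a = b * a * b := by
    have : b = (b * a)⁻¹ * a * (b * a) := by
      rw [← Y.cm2, map_mul, hμa, hμb, ← map_mul]
    rw [mul_assoc, eq_inv_mul_iff_mul_eq] at this
    rw [this, mul_assoc]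
  have hgenQ : Subgroup.closure {Y.μ a, Y.μ b} = ⊤ := by rw [hμa, hμb, closure_A4]
  have hgen : Subgroup.closure {a, b} = ⊤ := by
    have haS : a ∈ Subgroup.closure {a, b} := Subgroup.subset_closure (by simp)
    have hbS : b ∈ Subgroup.closure {a, b} := Subgroup.subset_closure (by simp)
    refine induced_eq_top hInd _ (act_mem_of_closure Y a b hgenQ _ haS hbS) fun m => ?_
    obtain ⟨k, rfl⟩ := Subgroup.mem_zpowers_iff.1 (hgenP m)
    rw [map_zpow]; exact zpow_mem haS k
  obtain ⟨hfin, hcard⟩ := card_le_of_braid ha3 hab hgen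
  have hμsurj : Function.Surjective Y.μ := by
    rw [← MonoidHom.range_eq_top, eq_top_iff, ← hgenQ, Subgroup.closure_le]
    rintro _ (rfl | rfl)
    exacts [⟨a, rfl⟩, ⟨b, rfl⟩]
  -- The morphism from `P` to the central extension, sending `t` to `matA`.
  obtain ⟨Z, hZ⟩ : ∃ Z : CrossedModule SL23 (alternatingGroup (Fin 4)), Z.μ = toA4 :=
    ⟨centralExtension toA4 toA4_surjective ker_toA4_le_center, rfl⟩
  have hord : orderOf matA ∣ orderOf t := by
    have h3 : orderOf matA ∣ 3 := orderOf_dvd_of_pow_eq_one matA_pow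
    have : orderOf t = 3 := orderOf_eq_prime ht3 (by
      intro h
      have : toA4 matA = 1 := congrArg Subtype.val h
      revert this; decide)
    rwa [this]
  let f : P →* SL23 := monoidHomOfForallMemZpowers hgenP hord
  have hft : f t = matA := monoidHomOfForallMemZpowers_apply_gen hgenP hord
  have hf : ∀ m, Z.μ (f m) = P.subtype m := by
    have : Z.μ.comp f = P.subtype :=
      (MonoidHom.eq_iff_eq_on_generator hgenP _ _).2 (by
        change Z.μ (f t) = toA4 matA
        rw [hft, hZ])
    exact DFunLike.congr_fun this
  obtain ⟨φ, ⟨-, hφ2, hφ3⟩, -⟩ := hInd.2 SL23 Z f ⟨hf, fun m p => by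
    rw [← hf p, Z.cm2, ← map_inv, ← map_mul, ← map_mul]; rfl⟩
  have hφa : φ a = matA := (hφ3 t).trans hft
  have hφb : φ b = matU := by
    rw [hφ2, hφa, ← hZ, Z.cm2, hconj]
  have hφ : Function.Surjective φ := by
    rw [← MonoidHom.range_eq_top, eq_top_iff, ← closure_mat, Subgroup.closure_le]
    rintro _ (rfl | rfl)
    exacts [⟨a, hφa⟩, ⟨b, hφb⟩]
  have hI : Nat.card I = 24 :=
    hcard.antisymm (card_SL23 ▸ Nat.card_le_card_of_surjective φ hφ)
  have hφbij : Function.Bijective φ :=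
    (Nat.bijective_iff_surjective_and_card φ).2 ⟨hφ, hI.trans card_SL23.symm⟩
  refine ⟨⟨MulEquiv.ofBijective φ hφbij⟩, hI, ?_⟩
  have h := Y.μ.ker.card_mul_index
  rw [Subgroup.index_ker, MonoidHom.range_eq_top.2 hμsurj, Subgroup.card_top, card_A4, hI] at h
  omega
end
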